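/- arXiv:1306.5014 — 3 statements merged into one kernel-verified Lean document; each statement's English description precedes it below -/
import Mathlib

section
/- Suppose f : ℝ → ℝ is continuous on [a,b] (with a < b), maps [a,b] into [a,b], and there is C ∈ (a,b) such that f is strictly increasing on [a,C] and strictly decreasing on [C,b]. If the l-th iterate f^[l] has a local extremum at a point x ∈ (a,b) relative to [a,b], then the (l+1)-st iterate f^[l+1] also has a local extremum at x relative to [a,b]. Consequently (by induction), for every q ≥ l, the iterate f^[q] has a local extremum at x relative to [a,b]. -/
/- A map that increases up to `c` and decreases afterwards sends local extrema to local extrema: if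
the extremal value lies strictly on one side of `c`, then by continuity so do all nearby values, and
the map is monotone or antitone there; if it equals `c`, the composite attains its maximum. -/

open Filter Function Set Topology

theorem isExtrFilter_comp_of_monotoneOn {α β γ : Type*} [Preorder β] [Preorder γ] {g : α → β}
    {h : β → γ} {t : Set β} {l : Filter α} {x : α} (hg : IsExtrFilter g l x)
    (hh : MonotoneOn h t) (hl : ∀ᶠ y in l, g y ∈ t) (hx : g x ∈ t) :
    IsExtrFilter (h ∘ g) l x :=
  hg.imp
    (fun hmin => by filter_upwards [hmin, hl] with y hxy hy using hh hx hy hxy)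
    (fun hmax => by filter_upwards [hmax, hl] with y hyx hy using hh hy hx hyx)

theorem isExtrFilter_comp_of_antitoneOn {α β γ : Type*} [Preorder β] [Preorder γ] {g : α → β}
    {h : β → γ} {t : Set β} {l : Filter α} {x : α} (hg : IsExtrFilter g l x)
    (hh : AntitoneOn h t) (hl : ∀ᶠ y in l, g y ∈ t) (hx : g x ∈ t) :
    IsExtrFilter (h ∘ g) l x :=
  isExtrFilter_dual_iff.1
    (isExtrFilter_comp_of_monotoneOn (h := OrderDual.toDual ∘ h) hg hh.dual_right hl hx)

theorem isMaxOn_of_mono_anti {β γ : Type*} [LinearOrder β] [Preorder γ]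
    {h : β → γ} {t : Set β} {c : β} (hc : c ∈ t) (hmono : MonotoneOn h (t ∩ Iic c))
    (hanti : AntitoneOn h (t ∩ Ici c)) : IsMaxOn h t c := by
  intro y hy
  rcases le_total y c with hyc | hcy
  · exact hmono ⟨hy, hyc⟩ ⟨hc, self_mem_Iic⟩ hyc
  · exact hanti ⟨hc, self_mem_Ici⟩ ⟨hy, hcy⟩ hcy

theorem isExtrFilter_comp_of_mono_anti {α β γ : Type*} [LinearOrder β]
    [TopologicalSpace β] [OrderClosedTopology β] [Preorder γ] {g : α → β} {h : β → γ} {t : Set β}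
    {c : β} {l : Filter α} {x : α} (hg : IsExtrFilter g l x) (hl : Tendsto g l (𝓝[t] g x))
    (hx : g x ∈ t) (hmono : MonotoneOn h (t ∩ Iic c)) (hanti : AntitoneOn h (t ∩ Ici c)) :
    IsExtrFilter (h ∘ g) l x := by
  rcases lt_trichotomy (g x) c with hlt | rfl | hgt
  · have hleft : t ∩ Iic c ∈ 𝓝[t] g x := inter_mem_nhdsWithin t (Iic_mem_nhds hlt)
    exact isExtrFilter_comp_of_monotoneOn hg hmono (hl hleft) ⟨hx, hlt.le⟩
  · have hmax : IsMaxFilter h (𝓝[t] g x) (g x) :=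
      (isMaxOn_of_mono_anti hx hmono hanti).localize
    exact (hmax.comp_tendsto hl).isExtr
  · have hright : t ∩ Ici c ∈ 𝓝[t] g x := inter_mem_nhdsWithin t (Ici_mem_nhds hgt)
    exact isExtrFilter_comp_of_antitoneOn hg hanti (hl hright) ⟨hx, hgt.le⟩

theorem extrema_of_iterates_persist_general {α : Type*} [LinearOrder α] [TopologicalSpace α]
    [OrderClosedTopology α] {f : α → α} {s : Set α} {c x : α} (hcont : ContinuousOn f s)
    (hmaps : MapsTo f s s) (hmono : MonotoneOn f (s ∩ Iic c)) (hanti : AntitoneOn f (s ∩ Ici c))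
    (hx : x ∈ s) {l q : ℕ} (hlq : l ≤ q) (hext : IsLocalExtrOn f^[l] s x) :
    IsLocalExtrOn f^[q] s x := by
  induction q, hlq using Nat.le_induction with
  | base => exact hext
  | succ n _ ih =>
    have hn : MapsTo f^[n] s s := hmaps.iterate n
    have htendsto : Tendsto f^[n] (𝓝[s] x) (𝓝[s] f^[n] x) :=
      (hcont.iterate hmaps n x hx).tendsto_nhdsWithin hn
    rw [iterate_succ']
    exact isExtrFilter_comp_of_mono_anti ih htendsto (hn hx) hmono hanti

/-- For a continuous unimodal map `f` of `[a,b]` into itself (strictly increasing on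
`[a,C]`, strictly decreasing on `[C,b]`), if `f^[l]` has a local extremum at
`x ∈ (a,b)` relative to `[a,b]`, then so does `f^[l+1]`, and hence so does `f^[q]`
for every `q ≥ l`. -/
theorem extrema_of_iterates_persist (f : ℝ → ℝ) (a b C : ℝ) (hab : a < b)
    (hC : C ∈ Set.Ioo a b)
    (hcont : ContinuousOn f (Set.Icc a b))
    (hmaps : Set.MapsTo f (Set.Icc a b) (Set.Icc a b))
    (hinc : StrictMonoOn f (Set.Icc a C))
    (hdec : StrictAntiOn f (Set.Icc C b))
    (l : ℕ) (x : ℝ) (hx : x ∈ Set.Ioo a b)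
    (hext : IsLocalMaxOn (f^[l]) (Set.Icc a b) x ∨ IsLocalMinOn (f^[l]) (Set.Icc a b) x) :
    (IsLocalMaxOn (f^[l + 1]) (Set.Icc a b) x ∨ IsLocalMinOn (f^[l + 1]) (Set.Icc a b) x) ∧
    (∀ q : ℕ, l ≤ q →
      IsLocalMaxOn (f^[q]) (Set.Icc a b) x ∨ IsLocalMinOn (f^[q]) (Set.Icc a b) x) := by
  have persist (q : ℕ) (hlq : l ≤ q) :
      IsLocalMaxOn f^[q] (Icc a b) x ∨ IsLocalMinOn f^[q] (Icc a b) x :=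
    (extrema_of_iterates_persist_general hcont hmaps
      (hinc.monotoneOn.mono fun _ hy => ⟨hy.1.1, hy.2⟩)
      (hdec.antitoneOn.mono fun _ hy => ⟨hy.2, hy.1.2⟩)
      (Ioo_subset_Icc_self hx) hlq hext.symm).symm
  exact ⟨persist (l + 1) l.le_succ, persist⟩
end

section
/- Suppose f : ℝ → ℝ is continuous on [a,b] (with a < b), maps [a,b] into [a,b], and there is C ∈ (a,b) such that f is strictly increasing on [a,C] and strictly decreasing on [C,b]. Let q ≥ 1. If the iterate f^[q] has a local extremum at a point x ∈ (a,b) relative to [a,b], then there exists an index i with 0 ≤ i ≤ q−1 such that f^[i](x) = C. (Location part of the paper's lemma on coordinates of the extrema of f^q.) -/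
/-!
A map that is strictly monotone or strictly antitone near an interior point has no local extremum
there, and this local property is preserved by composition along continuous maps. If the orbit of
`x` avoids `C` up to time `q - 1`, then `f` has the property at each of `x, …, f^[q - 1] x`, and
composing gives it for `f^[q]` at `x`.
-/

open Filter Set Topology

section Extrema

variable {α β : Type*} [TopologicalSpace α] [Preorder α] [Preorder β]
  {f : α → β} {s : Set α} {x : α} [(𝓝[<] x).NeBot] [(𝓝[>] x).NeBot]

theorem not_isLocalExtr_of_strictMonoOn (hf : StrictMonoOn f s) (hs : s ∈ 𝓝 x) :
    ¬ IsLocalExtr f x := by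
  have hxs : x ∈ s := mem_of_mem_nhds hs
  rintro (hmin | hmax)
  · obtain ⟨y, hyx, hxy, hys⟩ := ((frequently_lt_nhds x).and_eventually (hmin.and hs)).exists
    exact (hf hys hxs hyx).not_ge hxy
  · obtain ⟨y, hxy, hyx, hys⟩ := ((frequently_gt_nhds x).and_eventually (hmax.and hs)).exists
    exact (hf hxs hys hxy).not_ge hyx

theorem not_isLocalExtr_of_strictAntiOn (hf : StrictAntiOn f s) (hs : s ∈ 𝓝 x) :
    ¬ IsLocalExtr f x := fun hext ↦
  not_isLocalExtr_of_strictMonoOn hf.dual_right hs (isExtrFilter_dual_iff.2 hext)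

end Extrema

/-- Local strict monotonicity, in either direction, of `f` at `x` relative to `t`: the notion of a
point of `t` that is not a turning point of `f`. The direction may depend on `x`. -/
def StrictMonoOrAntiWithinAt {α β : Type*} [TopologicalSpace α] [Preorder α] [Preorder β]
    (f : α → β) (t : Set α) (x : α) : Prop :=
  ∃ s ∈ 𝓝[t] x, StrictMonoOn f s ∨ StrictAntiOn f s

namespace StrictMonoOrAntiWithinAt

variable {α β γ : Type*} [TopologicalSpace α] [Preorder α] [Preorder β]

protected theorem id (t : Set α) (x : α) : StrictMonoOrAntiWithinAt id t x :=
  ⟨univ, univ_mem, .inl (strictMono_id.strictMonoOn univ)⟩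

protected theorem comp [TopologicalSpace β] [Preorder γ] {g : β → γ} {f : α → β} {t : Set α}
    {u : Set β} {x : α} (hg : StrictMonoOrAntiWithinAt g u (f x))
    (hf : StrictMonoOrAntiWithinAt f t x) (hcont : ContinuousWithinAt f t x)
    (hmaps : MapsTo f t u) :
    StrictMonoOrAntiWithinAt (g ∘ f) t x := by
  obtain ⟨v, hv, hg⟩ := hg
  obtain ⟨s, hs, hf⟩ := hf
  have hpre : f ⁻¹' v ∈ 𝓝[t] x := hcont.tendsto_nhdsWithin hmaps hv
  have hsv : MapsTo f (s ∩ f ⁻¹' v) v := fun _ hy ↦ hy.2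
  have hf' : StrictMonoOn f (s ∩ f ⁻¹' v) ∨ StrictAntiOn f (s ∩ f ⁻¹' v) :=
    hf.imp (·.mono inter_subset_left) (·.mono inter_subset_left)
  refine ⟨s ∩ f ⁻¹' v, inter_mem hs hpre, ?_⟩
  rcases hf' with hf | hf <;> rcases hg with hg | hg
  · exact .inl (hg.comp hf hsv)
  · exact .inr (hg.comp_strictMonoOn hf hsv)
  · exact .inr (hg.comp_strictAntiOn hf hsv)
  · exact .inl (hg.comp hf hsv)

protected theorem iterate {f : α → α} {t : Set α} {x : α} (hcont : ContinuousOn f t)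
    (hmaps : MapsTo f t t) (hx : x ∈ t)
    {n : ℕ} (h : ∀ i < n, StrictMonoOrAntiWithinAt f t (f^[i] x)) :
    StrictMonoOrAntiWithinAt f^[n] t x := by
  induction n with
  | zero => exact .id t x
  | succ n ih =>
    rw [Function.iterate_succ']
    exact (h n n.lt_succ_self).comp (ih fun i hi ↦ h i (hi.trans n.lt_succ_self))
      (hcont.iterate hmaps n x hx) (hmaps.iterate n)

theorem not_isLocalExtrOn {f : α → β} {t : Set α} {x : α} [(𝓝[<] x).NeBot] [(𝓝[>] x).NeBot]
    (hf : StrictMonoOrAntiWithinAt f t x) (ht : t ∈ 𝓝 x) : ¬ IsLocalExtrOn f t x := by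
  intro hext
  obtain ⟨s, hs, hf⟩ := hf
  rw [nhdsWithin_eq_nhds.2 ht] at hs
  rcases hf with hf | hf
  · exact not_isLocalExtr_of_strictMonoOn hf hs (hext.isLocalExtr ht)
  · exact not_isLocalExtr_of_strictAntiOn hf hs (hext.isLocalExtr ht)

theorem of_strictMonoOn_Icc_of_strictAntiOn_Icc {α : Type*} [TopologicalSpace α] [LinearOrder α]
    [OrderClosedTopology α] {f : α → β} {a b c y : α} (hinc : StrictMonoOn f (Icc a c))
    (hdec : StrictAntiOn f (Icc c b)) (hy : y ≠ c) :
    StrictMonoOrAntiWithinAt f (Icc a b) y := by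
  rcases hy.lt_or_gt with hlt | hgt
  · exact ⟨Icc a b ∩ Iio c, inter_mem_nhdsWithin _ (Iio_mem_nhds hlt),
      .inl (hinc.mono fun _ hz ↦ ⟨hz.1.1, hz.2.le⟩)⟩
  · exact ⟨Icc a b ∩ Ioi c, inter_mem_nhdsWithin _ (Ioi_mem_nhds hgt),
      .inr (hdec.mono fun _ hz ↦ ⟨hz.2.le, hz.1.2⟩)⟩

end StrictMonoOrAntiWithinAt

theorem extremum_iterate_hits_critical_general {α : Type*} [TopologicalSpace α] [Preorder α]
    {f : α → α} {t : Set α} (hcont : ContinuousOn f t) (hmaps : MapsTo f t t) {x : α}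
    [(𝓝[<] x).NeBot] [(𝓝[>] x).NeBot] (ht : t ∈ 𝓝 x) {n : ℕ} (hext : IsLocalExtrOn f^[n] t x) :
    ∃ i < n, ¬ StrictMonoOrAntiWithinAt f t (f^[i] x) := by
  by_contra! hmono
  exact (StrictMonoOrAntiWithinAt.iterate hcont hmaps (mem_of_mem_nhds ht) hmono).not_isLocalExtrOn
    ht hext

/-- For a continuous unimodal map `f` of `[a,b]` into itself (strictly increasing on
`[a,C]`, strictly decreasing on `[C,b]`), if `f^[q]` (with `q ≥ 1`) has a local
extremum at `x ∈ (a,b)` relative to `[a,b]`, then `f^[i] x = C` for some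
`0 ≤ i ≤ q - 1`. -/
theorem extremum_iterate_hits_critical (f : ℝ → ℝ) (a b C : ℝ) (hab : a < b)
    (hC : C ∈ Set.Ioo a b)
    (hcont : ContinuousOn f (Set.Icc a b))
    (hmaps : Set.MapsTo f (Set.Icc a b) (Set.Icc a b))
    (hinc : StrictMonoOn f (Set.Icc a C))
    (hdec : StrictAntiOn f (Set.Icc C b))
    (q : ℕ) (hq : 1 ≤ q) (x : ℝ) (hx : x ∈ Set.Ioo a b)
    (hext : IsLocalMaxOn (f^[q]) (Set.Icc a b) x ∨ IsLocalMinOn (f^[q]) (Set.Icc a b) x) :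
    ∃ i : ℕ, i ≤ q - 1 ∧ f^[i] x = C := by
  obtain ⟨i, hi, hturn⟩ :=
    extremum_iterate_hits_critical_general hcont hmaps (Icc_mem_nhds hx.1 hx.2) hext.symm
  exact ⟨i, Nat.le_sub_one_of_lt hi, not_imp_comm.1
    (StrictMonoOrAntiWithinAt.of_strictMonoOn_Icc_of_strictAntiOn_Icc hinc hdec) hturn⟩
end

section
/- Suppose f : ℝ → ℝ is continuous on [a,b] (with a < b), there is C ∈ (a,b) such that f is strictly increasing on [a,C] and strictly decreasing on [C,b], and f(a) = a, f(b) = a, and f(C) = b (a 'full' unimodal map). Then for every natural number q, the set {x ∈ [a,b] : f^[q](x) = C} has exactly 2^q elements. (This is the counting claim used in the paper's error estimate: there are at least 2^q local extrema of f^q in [a,b], located at the preimages of the critical point.) -/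
/-!
Over every value `y ∈ (a, b)` the map has exactly two preimages, one on each monotone branch. Since
both endpoints are sent to `a`, these preimages lie again in `(a, b)`, so the doubling can be
iterated; the critical point is just one of the admissible values.
-/

open Set

section Fibers

variable {α β : Type*}

theorem encard_inter_preimage_eq_mul {f : α → β} {s : Set α} {u : Set β} {m : ℕ∞} (hu : u.Finite)
    (hfiber : ∀ y ∈ u, (s ∩ f ⁻¹' {y}).encard = m) :
    (s ∩ f ⁻¹' u).encard = u.encard * m := by
  have hdisj : u.PairwiseDisjoint fun y ↦ s ∩ f ⁻¹' {y} :=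
    (pairwiseDisjoint_fiber f u).mono fun _ ↦ inter_subset_right
  calc (s ∩ f ⁻¹' u).encard
    _ = (⋃ y ∈ u, s ∩ f ⁻¹' {y}).encard := by
      rw [← inter_iUnion₂, biUnion_preimage_singleton]
    _ = ∑ᶠ y ∈ u, (s ∩ f ⁻¹' {y}).encard := hu.encard_biUnion hdisj
    _ = ∑ᶠ y ∈ u, m := finsum_mem_congr rfl hfiber
    _ = u.encard * m := by
      rw [finsum_mem_eq_finite_toFinset_sum _ hu, Finset.sum_const, nsmul_eq_mul,
        hu.encard_eq_coe_toFinset_card]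

theorem encard_inter_preimage_iterate_singleton {f : α → α} {s t : Set α} {k : ℕ}
    (hmaps : MapsTo f s s) (hts : t ⊆ s) (hback : s ∩ f ⁻¹' t ⊆ t)
    (hfiber : ∀ y ∈ t, (s ∩ f ⁻¹' {y}).encard = k) (n : ℕ) {y : α} (hy : y ∈ t) :
    (s ∩ f^[n] ⁻¹' {y}).encard = k ^ n := by
  induction n generalizing y with
  | zero => simp [inter_eq_right.2 (singleton_subset_iff.2 (hts hy))]
  | succ n ih =>
    have hsplit : s ∩ f^[n + 1] ⁻¹' {y} = s ∩ f^[n] ⁻¹' (s ∩ f ⁻¹' {y}) := by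
      rw [Function.iterate_succ', preimage_comp, preimage_inter, ← inter_assoc,
        inter_eq_left.2 (hmaps.iterate n).subset_preimage]
    have hfin : (s ∩ f ⁻¹' {y}).Finite := finite_of_encard_eq_coe (hfiber y hy)
    have hsub : s ∩ f ⁻¹' {y} ⊆ t :=
      (inter_subset_inter_right s (preimage_mono (singleton_subset_iff.2 hy))).trans hback
    have hcount : ∀ x ∈ s ∩ f ⁻¹' {y}, (s ∩ f^[n] ⁻¹' {x}).encard = k ^ n :=
      fun x hx ↦ ih (hsub hx)
    rw [hsplit, encard_inter_preimage_eq_mul hfin hcount, hfiber y hy, pow_succ']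

end Fibers

section Unimodal

variable {α β : Type*}

theorem mapsTo_Icc_of_monotoneOn_of_antitoneOn [LinearOrder α] [LinearOrder β] {f : α → β}
    {a b c : α} (hmono : MonotoneOn f (Icc a c)) (hanti : AntitoneOn f (Icc c b)) :
    MapsTo f (Icc a b) (Icc (min (f a) (f b)) (f c)) := by
  have hleft : MapsTo f (Icc a c) (Icc (min (f a) (f b)) (f c)) :=
    hmono.mapsTo_Icc.mono_right (Icc_subset_Icc_left (min_le_left _ _))
  have hright : MapsTo f (Icc c b) (Icc (min (f a) (f b)) (f c)) :=
    hanti.mapsTo_Icc.mono_right (Icc_subset_Icc_left (min_le_right _ _))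
  exact (hleft.union hright).mono_left Icc_subset_Icc_union_Icc

variable [ConditionallyCompleteLinearOrder α] [TopologicalSpace α] [OrderTopology α]
  [DenselyOrdered α]

theorem encard_Icc_inter_preimage_singleton_eq_two [LinearOrder β] [TopologicalSpace β]
    [OrderClosedTopology β] {f : α → β} {a b c : α} {y : β} (hc : c ∈ Icc a b)
    (hcont : ContinuousOn f (Icc a b)) (hmono : StrictMonoOn f (Icc a c))
    (hanti : StrictAntiOn f (Icc c b)) (hya : f a ≤ y) (hyb : f b ≤ y) (hyc : y < f c) :
    (Icc a b ∩ f ⁻¹' {y}).encard = 2 := by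
  obtain ⟨l, hl, hfl⟩ : ∃ l ∈ Ico a c, f l = y :=
    intermediate_value_Ico hc.1 (hcont.mono (Icc_subset_Icc_right hc.2)) ⟨hya, hyc⟩
  obtain ⟨r, hr, hfr⟩ : ∃ r ∈ Ioc c b, f r = y :=
    intermediate_value_Ioc' hc.2 (hcont.mono (Icc_subset_Icc_left hc.1)) ⟨hyb, hyc⟩
  refine encard_eq_two.2 ⟨l, r, (hl.2.trans hr.1).ne, Subset.antisymm ?_ ?_⟩
  · rintro x ⟨hx, hfx : f x = y⟩
    rcases le_total x c with hxc | hcx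
    · exact .inl (hmono.injOn ⟨hx.1, hxc⟩ (Ico_subset_Icc_self hl) (hfx.trans hfl.symm))
    · exact .inr (hanti.injOn ⟨hcx, hx.2⟩ (Ioc_subset_Icc_self hr) (hfx.trans hfr.symm))
  · exact pair_subset ⟨⟨hl.1, hl.2.le.trans hc.2⟩, hfl⟩ ⟨⟨hc.1.trans hr.1.le, hr.2⟩, hfr⟩

theorem card_preimages_of_critical_point_general {f : α → α} {a b c y : α} (hc : c ∈ Icc a b)
    (hcont : ContinuousOn f (Icc a b)) (hmono : StrictMonoOn f (Icc a c))
    (hanti : StrictAntiOn f (Icc c b)) (hfa : f a = a) (hfb : f b = a) (hfc : f c = b)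
    (hy : y ∈ Ioo a b) (n : ℕ) :
    {x ∈ Icc a b | f^[n] x = y}.encard = 2 ^ n := by
  have hmaps : MapsTo f (Icc a b) (Icc a b) := by
    simpa only [hfa, hfb, hfc, min_self] using
      mapsTo_Icc_of_monotoneOn_of_antitoneOn hmono.monotoneOn hanti.antitoneOn
  have hback : Icc a b ∩ f ⁻¹' Ioo a b ⊆ Ioo a b := by
    rintro x ⟨hx, hfx : f x ∈ Ioo a b⟩
    rcases eq_endpoints_or_mem_Ioo_of_mem_Icc hx with rfl | rfl | hx
    · exact absurd hfa hfx.1.ne'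
    · exact absurd hfb hfx.1.ne'
    · exact hx
  have hfiber : ∀ z ∈ Ioo a b, (Icc a b ∩ f ⁻¹' {z}).encard = (2 : ℕ) := fun z hz ↦
    encard_Icc_inter_preimage_singleton_eq_two hc hcont hmono hanti
      (hfa.trans_le hz.1.le) (hfb.trans_le hz.1.le) (hz.2.trans_eq hfc.symm)
  exact encard_inter_preimage_iterate_singleton hmaps Ioo_subset_Icc_self hback hfiber n hy

end Unimodal

/-- For a full continuous unimodal map of `[a,b]` (strictly increasing on `[a,C]`,
strictly decreasing on `[C,b]`, with `f a = a`, `f b = a`, `f C = b`), the set of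
points of `[a,b]` mapped to the critical point `C` by `f^[q]` has exactly
`2 ^ q` elements. -/
theorem card_preimages_of_critical_point (f : ℝ → ℝ) (a b C : ℝ) (hab : a < b)
    (hC : C ∈ Set.Ioo a b)
    (hcont : ContinuousOn f (Set.Icc a b))
    (hinc : StrictMonoOn f (Set.Icc a C))
    (hdec : StrictAntiOn f (Set.Icc C b))
    (hfa : f a = a) (hfb : f b = a) (hfC : f C = b) (q : ℕ) :
    {x ∈ Set.Icc a b | f^[q] x = C}.Finite ∧
    {x ∈ Set.Icc a b | f^[q] x = C}.ncard = 2 ^ q := by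
  have hcard : {x ∈ Icc a b | f^[q] x = C}.encard = (2 ^ q : ℕ) := mod_cast
    card_preimages_of_critical_point_general (Ioo_subset_Icc_self hC) hcont hinc hdec
      hfa hfb hfC hC q
  exact ⟨finite_of_encard_eq_coe hcard, by rw [ncard, hcard, ENat.toNat_natCast]⟩
end
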